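/- Let p be a prime, let κ be a cardinal with κ > ℶ_{2p−1} (the (2p−1)-st beth number), let V_κ = ⊕_κ ℤ/pℤ, and let H be an arbitrary abelian group. If f : V_κ^# → H^# is a continuous map, then there exists an infinite S ⊆ κ such that f is linear on [S]^p, where [S]^p denotes the set of elements Σ_{α∈s} e_α of V_κ for p-element subsets s of S. -/

import Mathlib

open scoped Pointwise

/-- The Bohr topology on an abelian group `G`: the initial topology induced by the
family of all group homomorphisms from `G` to the circle group `ℝ/ℤ`. -/
noncomputable def bohrTopology (G : Type*) [AddCommGroup G] : TopologicalSpace G :=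
  ⨅ χ : G →+ AddCircle (1 : ℝ), TopologicalSpace.induced χ inferInstance

/-- The set `[S]^n` inside `⊕_κ ℤ/pℤ`: sums `Σ_{α ∈ s} e_α` over `n`-element subsets
`s` of `S`. -/
def basisSums (p : ℕ) {κ : Type*} (S : Set κ) (n : ℕ) : Set (κ →₀ ZMod p) :=
  {x | x.support.card = n ∧ (∀ i ∈ x.support, x i = 1) ∧ ↑x.support ⊆ S}

universe u v



theorem bs_step {W K C : Type*} [LinearOrder W] [DecidableEq K] (n : ℕ)
    (c : Finset K → C) (c' : Finset W → C) (x : W → K) (hx : Function.Injective x)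
    (h : ∀ (ξ : W) (a : Finset W), (∀ η ∈ a, η < ξ) → c (insert (x ξ) (a.image x)) = c' a)
    (hS : ∃ S : Set W, S.Infinite ∧ ∃ γ, ∀ a : Finset W, a.card = n → (a : Set W) ⊆ S → c' a = γ) :
    ∃ S : Set K, S.Infinite ∧ ∃ γ, ∀ b : Finset K, b.card = n + 1 → (b : Set K) ⊆ S → c b = γ := by
  obtain ⟨S, hSi, γ, hγ⟩ := hS
  refine ⟨x '' S, hSi.image hx.injOn, γ, ?_⟩
  intro b hb hbS
  obtain ⟨a, haS, rfl⟩ := Finset.subset_set_image_iff.mp hbS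
  rw [Finset.card_image_of_injective _ hx] at hb
  have hne : a.Nonempty := Finset.card_pos.mp (by omega)
  have hm := a.max'_mem hne
  have e : a = insert (a.max' hne) (a.erase (a.max' hne)) := (Finset.insert_erase hm).symm
  rw [e, Finset.image_insert, h]
  · apply hγ
    · rw [Finset.card_erase_of_mem hm, hb]; rfl
    · exact fun y hy => haS (Finset.mem_of_mem_erase hy)
  · intro η hη
    exact Finset.lt_max'_of_mem_erase_max' a hne hη



theorem bs_rec {W K : Type*} [LinearOrder W] [WellFoundedLT W]
    (Q : ∀ ξ : W, (Set.Iio ξ → K) → K → Prop) (h : ∀ ξ X, ∃ z, Q ξ X z) :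
    ∃ x : W → K, ∀ ξ, Q ξ (fun η => x η) (x ξ) := by
  choose g hg using h
  let x : W → K := (wellFounded_lt (α := W)).fix (fun ξ ih => g ξ (fun η => ih η.1 η.2))
  refine ⟨x, fun ξ => ?_⟩
  have : x ξ = g ξ (fun η => x η) := (wellFounded_lt (α := W)).fix_eq _ ξ
  rw [this]
  exact hg _ _

/-- Common induction step for the theorems of Ramsey and of Erdős and Rado. -/
theorem bs_step2 {W K C : Type*} [LinearOrder W] [WellFoundedLT W] [DecidableEq K] (n : ℕ)
    (c : Finset K → C) (c' : Finset K → C)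
    (h : ∀ (ξ : W) (X : Set.Iio ξ → K), ∃ z, (∀ η, X η ≠ z) ∧
      ∀ a : Finset (Set.Iio ξ), c (insert z (a.image X)) = c' (a.image X))
    (ih : ∀ c'' : Finset W → C, ∃ S : Set W, S.Infinite ∧ ∃ γ,
      ∀ a : Finset W, a.card = n → (a : Set W) ⊆ S → c'' a = γ) :
    ∃ S : Set K, S.Infinite ∧ ∃ γ, ∀ b : Finset K, b.card = n + 1 → (b : Set K) ⊆ S → c b = γ := by
  classical
  obtain ⟨x, hx⟩ := bs_rec (fun ξ X z => (∀ η, X η ≠ z) ∧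
      ∀ a : Finset (Set.Iio ξ), c (insert z (a.image X)) = c' (a.image X)) h
  have hne : ∀ η ξ, η < ξ → x η ≠ x ξ := fun η ξ hl => (hx ξ).1 ⟨η, hl⟩
  have hinj : Function.Injective x := by
    intro a b hab
    rcases lt_trichotomy a b with h | h | h
    · exact absurd hab (hne _ _ h)
    · exact h
    · exact absurd hab.symm (hne _ _ h)
  refine bs_step n c (fun a => c' (a.image x)) x hinj ?_ (ih _)
  intro ξ a ha
  have := (hx ξ).2 (a.subtype (· ∈ Set.Iio ξ))
  have e : (a.subtype (· ∈ Set.Iio ξ)).image (fun η : Set.Iio ξ => x η) = a.image x := by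
    ext y
    simp only [Finset.mem_image, Finset.mem_subtype, Subtype.exists, Set.mem_Iio]
    constructor
    · rintro ⟨η, _, hη, rfl⟩; exact ⟨η, hη, rfl⟩
    · rintro ⟨η, hη, rfl⟩; exact ⟨η, ha η hη, hη, rfl⟩
  rw [e] at this
  exact this

/-- Infinite Ramsey theorem. -/
theorem bs_ramsey {C : Type*} [Finite C] (n : ℕ) : ∀ (c : Finset ℕ → C),
    ∃ S : Set ℕ, S.Infinite ∧ ∃ γ, ∀ a : Finset ℕ, a.card = n → (a : Set ℕ) ⊆ S → c a = γ := by
  induction n with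
  | zero =>
    intro c
    refine ⟨Set.univ, Set.infinite_univ, c ∅, ?_⟩
    intro a ha _
    rw [Finset.card_eq_zero.mp ha]
  | succ n ih =>
    intro c
    let U : Ultrafilter ℕ := Filter.hyperfilter ℕ
    have hc : ∀ a : Finset ℕ, ∃ γ, ∀ᶠ z in (U : Filter ℕ), c (insert z a) = γ := by
      intro a
      have := Ultrafilter.eventually_exists_iff (f := U) (P := fun γ z => c (insert z a) = γ)
      exact this.mp (Filter.Eventually.of_forall fun z => ⟨_, rfl⟩)
    choose c' hc' using hc
    refine bs_step2 (W := ℕ) n c c' ?_ ih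
    intro ξ X
    have h1 : ∀ᶠ z in (U : Filter ℕ), ∀ η, X η ≠ z := by
      rw [Filter.eventually_all]
      intro η
      have h0 : ∀ᶠ z in (U : Filter ℕ), X η < z :=
        Nat.hyperfilter_le_atTop (Filter.eventually_gt_atTop (X η))
      exact h0.mono fun _ h => ne_of_lt h
    have h2 : ∀ᶠ z in (U : Filter ℕ), ∀ a : Finset (Set.Iio ξ),
        c (insert z (a.image X)) = c' (a.image X) := by
      rw [Filter.eventually_all]
      intro a
      exact hc' _
    exact (h1.and h2).exists

/-- Erdős–Rado (weak form, infinite homogeneous sets, countably many colours). -/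
theorem bs_erdosRado {C : Type*} [Countable C] (n : ℕ) : ∀ (K : Type u)
    (_ : Cardinal.beth (n : Ordinal.{u}) < Cardinal.mk K) (c : Finset K → C),
    ∃ S : Set K, S.Infinite ∧ ∃ γ, ∀ a : Finset K, a.card = n + 1 → (a : Set K) ⊆ S → c a = γ := by
  induction n with
  | zero =>
    intro K hK c
    simp only [Nat.cast_zero, Cardinal.beth_zero] at hK
    have : Uncountable K := Cardinal.aleph0_lt_mk_iff.mp hK
    have : ∃ γ, ((fun k => c {k}) ⁻¹' {γ}).Infinite := by
      by_contra! hcon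
      have h1 : (Set.univ : Set K) = ⋃ γ, ((fun k => c {k}) ⁻¹' {γ}) := by ext; simp
      have h2 : (Set.univ : Set K).Countable := by
        rw [h1]
        exact Set.countable_iUnion fun γ => (hcon γ).countable
      exact Set.not_countable_univ h2
    obtain ⟨γ, hγ⟩ := this
    refine ⟨_, hγ, γ, ?_⟩
    intro a ha haS
    obtain ⟨k, rfl⟩ := Finset.card_eq_one.mp ha
    exact haS (by simp)
  | succ n ih =>
    intro K hK c
    classical
    rw [Nat.cast_succ, Cardinal.beth_add_one] at hK
    set lam := Cardinal.beth (n : Ordinal.{u}) with hlam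
    have hlinf : Cardinal.aleph0 ≤ lam := Cardinal.aleph0_le_beth _
    let W : Type u := (Order.succ lam).ord.ToType
    have hW : Cardinal.mk W = Order.succ lam := by simp [W]
    let L : Type u := lam.out
    have hL : Cardinal.mk L = lam := Cardinal.mk_out _
    obtain ⟨enc, henc⟩ := Countable.exists_injective_nat C
    let d : Finset K → ℕ := fun a => enc (c a)
    -- Skolem hull
    let α : Type u := Σ A : Set L, (Finset A → ℕ)
    let β : α → Type u := fun t => t.1
    have hK0 : Nonempty K := by
      rw [← Cardinal.mk_ne_zero_iff]; exact (pos_of_gt hK).ne'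
    let g : ∀ t : α, (β t → K) → K := fun t X => Classical.epsilon (fun z =>
      (∀ η, X η ≠ z) ∧ ∀ a : Finset t.1, d (insert z (a.image X)) = t.2 a)
    let ev : WType β → K := fun w => WType.elim K (fun s => g s.1 s.2) w
    have hcard : Cardinal.mk (WType β) ≤ 2 ^ lam := by
      apply WType.cardinalMk_le_of_le
      have hα : Cardinal.mk α ≤ 2 ^ lam := by
        have : Infinite L := by rw [Cardinal.infinite_iff, hL]; exact hlinf
        rw [Cardinal.mk_sigma]
        calc Cardinal.sum (fun A : Set L => Cardinal.mk (Finset A → ℕ))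
            ≤ Cardinal.sum (fun A : Set L => (2 ^ lam : Cardinal.{u})) := by
              apply Cardinal.sum_le_sum
              intro A
              have h1 : Cardinal.mk (Finset A) ≤ lam := by
                rw [← hL, ← Cardinal.mk_finset_of_infinite L]
                exact Cardinal.mk_le_of_injective (Finset.map_injective (Function.Embedding.subtype _))
              have h2 : Cardinal.mk (Finset A → ℕ) = Cardinal.aleph0 ^ Cardinal.mk (Finset A) := by
                simp
              rw [h2]
              calc _ ≤ Cardinal.aleph0 ^ lam :=
                    Cardinal.power_le_power_left Cardinal.aleph0_ne_zero h1
                _ = 2 ^ lam := Cardinal.power_eq_two_power hlinf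
                    (by exact_mod_cast (Cardinal.natCast_lt_aleph0 (n := 2)).le) hlinf
          _ = 2 ^ lam * 2 ^ lam := by simp [hL]
          _ = 2 ^ lam := by rw [← Cardinal.power_add, Cardinal.add_eq_self hlinf]
      calc Cardinal.sum (fun a : α => (2 ^ lam) ^ Cardinal.mk (β a))
          ≤ Cardinal.sum (fun a : α => (2 ^ lam : Cardinal.{u})) := by
            apply Cardinal.sum_le_sum
            intro a
            rw [← Cardinal.power_mul]
            apply Cardinal.power_le_power_left two_ne_zero
            calc lam * Cardinal.mk (β a) ≤ lam * lam := by
                  gcongr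
                  rw [← hL]; exact Cardinal.mk_set_le _
              _ = lam := Cardinal.mul_eq_self hlinf
        _ = Cardinal.mk α * 2 ^ lam := by simp
        _ ≤ 2 ^ lam * 2 ^ lam := by gcongr
        _ = 2 ^ lam := by
          rw [← Cardinal.power_add, Cardinal.add_eq_self hlinf]
    have : ∃ y, y ∉ Set.range ev := by
      by_contra! hcon
      have : Cardinal.mk K ≤ Cardinal.mk (WType β) :=
        Cardinal.mk_le_of_surjective (f := ev) hcon
      exact absurd (this.trans hcard) (not_le.mpr hK)
    obtain ⟨y, hy⟩ := this
    have key : ∀ (ξ : W) (X : Set.Iio ξ → Set.range ev), ∃ z : Set.range ev, (∀ η, X η ≠ z) ∧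
      ∀ a : Finset (Set.Iio ξ), (fun b : Finset (Set.range ev) => c (b.image Subtype.val)) (insert z (a.image X)) = 
        (fun b : Finset (Set.range ev) => c (insert y (b.image Subtype.val))) (a.image X) := by
      intro ξ X
      have hξ : Cardinal.mk (Set.Iio ξ) ≤ Cardinal.mk L := by
        rw [hL, ← Order.lt_succ_iff]
        exact Cardinal.mk_Iio_toType_ord_lt ξ
      obtain ⟨e⟩ := hξ
      let q : Set.Iio ξ ≃ Set.range e := Equiv.ofInjective e e.injective
      have hw : ∀ η, ∃ w, ev w = X η := fun η => (X η).2
      choose w hw using hw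
      let X' : Set.range e → K := fun l => (X (q.symm l)).1
      let t : α := ⟨Set.range e, fun a => d (insert y (a.image X'))⟩
      let z : K := ev (WType.mk t (fun l => w (q.symm l)))
      have hz : z = g t X' := by
        change g t (fun l => ev (w (q.symm l))) = g t X'
        congr 1
        funext l
        exact hw _
      have hspec : (∀ η, X' η ≠ z) ∧ ∀ a : Finset t.1, d (insert z (a.image X')) = t.2 a := by
        rw [hz]
        apply Classical.epsilon_spec (p := fun z =>
          (∀ η, X' η ≠ z) ∧ ∀ a : Finset t.1, d (insert z (a.image X')) = t.2 a)
        refine ⟨y, ?_, fun a => rfl⟩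
        intro η h
        exact hy (h ▸ (X (q.symm η)).2)
      refine ⟨⟨z, _, rfl⟩, ?_, ?_⟩
      · intro η h
        apply hspec.1 (q η)
        simp only [X', Equiv.symm_apply_apply, h]
      · intro a
        have h1 := henc (hspec.2 (a.image q))
        have h2 : (a.image q).image X' = (a.image X).image Subtype.val := by
          rw [Finset.image_image, Finset.image_image]
          congr 1
          funext η
          simp [X']
        rw [h2] at h1
        simp only [Finset.image_insert]
        exact h1
    obtain ⟨S, hS, γ, hγ⟩ := bs_step2 (W := W) (K := Set.range ev) (n + 1)
      (fun b : Finset (Set.range ev) => c (b.image Subtype.val))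
      (fun b : Finset (Set.range ev) => c (insert y (b.image Subtype.val))) key
      (fun c'' => ih W (by rw [hW]; exact Order.lt_succ _) c'')
    refine ⟨Subtype.val '' S, hS.image Subtype.val_injective.injOn, γ, ?_⟩
    intro b hb hbS
    obtain ⟨a, haS, rfl⟩ := Finset.subset_set_image_iff.mp hbS
    rw [Finset.card_image_of_injective _ Subtype.val_injective] at hb
    exact hγ a hb haS

open Submodule in
theorem bs_cyclic_embed {H : Type*} [AddCommGroup H] (a : H) :
    ∃ g : (ℤ ∙ a) →ₗ[ℤ] (ℚ × AddCircle (1:ℚ)), Function.Injective g := by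
  obtain ⟨q, hq⟩ : ∃ q : ℚ × AddCircle (1:ℚ), addOrderOf q = addOrderOf a := by
    rcases Nat.eq_zero_or_pos (addOrderOf a) with h | h
    · refine ⟨(1, 0), ?_⟩
      rw [h, addOrderOf_eq_zero_iff']
      intro n hn h0
      have := congrArg Prod.fst h0
      simp at this
      omega
    · refine ⟨(0, ((1 / (addOrderOf a : ℚ) : ℚ) : AddCircle (1:ℚ))), ?_⟩
      have : Fact ((0:ℚ) < 1) := ⟨one_pos⟩
      rw [Prod.addOrderOf_mk]
      simp only [addOrderOf_zero, Nat.lcm_one_left]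
      exact AddCircle.addOrderOf_period_div h
  let l : (ℤ ⧸ Ideal.span {(addOrderOf a : ℤ)}) →ₗ[ℤ] (ℚ × AddCircle (1:ℚ)) :=
    Submodule.liftQ (Ideal.span {(addOrderOf a : ℤ)}) (LinearMap.toSpanSingleton ℤ _ q) (by
      intro x hx
      rw [Ideal.mem_span_singleton] at hx
      rw [LinearMap.mem_ker, LinearMap.toSpanSingleton_apply, ← addOrderOf_dvd_iff_zsmul_eq_zero, hq]
      exact hx)
  have hl : Function.Injective l := by
    rw [← LinearMap.ker_eq_bot]
    apply Submodule.ker_liftQ_eq_bot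
    intro x hx
    rw [LinearMap.mem_ker, LinearMap.toSpanSingleton_apply, ← addOrderOf_dvd_iff_zsmul_eq_zero, hq] at hx
    exact Ideal.mem_span_singleton.2 hx
  refine ⟨l ∘ₗ (CharacterModule.intSpanEquivQuotAddOrderOf a).toLinearMap, ?_⟩
  exact hl.comp (CharacterModule.intSpanEquivQuotAddOrderOf a).injective

open Submodule in
theorem bs_embed (H : Type u) [AddCommGroup H] :
    ∃ (I : Type u) (j : H →+ (I →₀ (ℚ × AddCircle (1:ℚ)))), Function.Injective j := by
  classical
  let 𝒮 : Set (Set (Submodule ℤ H)) := {s | sSupIndep s ∧ ∀ N ∈ s, ∃ a : H, N = ℤ ∙ a}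
  obtain ⟨s, hs⟩ : ∃ s, Maximal (· ∈ 𝒮) s := by
    apply zorn_subset
    intro c hc hchain
    refine ⟨⋃₀ c, ⟨?_, ?_⟩, fun s hs => Set.subset_sUnion_of_mem hs⟩
    · apply iSupIndep_sUnion_of_directed
      · exact hchain.directedOn
      · exact fun s hs => (hc hs).1
    · rintro N ⟨t, ht, hN⟩
      exact (hc ht).2 N hN
  have hess : ∀ x : H, x ≠ 0 → ∃ k : ℤ, k • x ≠ 0 ∧ k • x ∈ sSup s := by
    intro x hx
    by_contra! hcon
    have hdis : Disjoint (ℤ ∙ x) (sSup s) := by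
      rw [Submodule.disjoint_def]
      intro y hy hy2
      obtain ⟨k, rfl⟩ := Submodule.mem_span_singleton.1 hy
      by_contra h0
      exact hcon k h0 hy2
    have hins : insert (ℤ ∙ x) s ∈ 𝒮 := by
      constructor
      · intro a ha
        rcases ha with rfl | ha
        · refine hdis.mono_right (sSup_le_sSup ?_)
          rintro b ⟨hb | hb, hb'⟩
          · exact absurd hb hb'
          · exact hb
        · have h1 := hs.prop.1 ha
          have h2 : sSup (insert (ℤ ∙ x) s \ {a}) ≤ (ℤ ∙ x) ⊔ sSup (s \ {a}) := by
            apply sSup_le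
            rintro b ⟨rfl | hb, hb'⟩
            · exact le_sup_left
            · exact le_sup_of_le_right (le_sSup ⟨hb, hb'⟩)
          refine Disjoint.mono_right h2 ?_
          rw [sup_comm]
          refine Disjoint.disjoint_sup_right_of_disjoint_sup_left h1 ?_
          refine (hdis.mono_right ?_).symm
          exact sup_le (le_sSup ha) (sSup_le_sSup Set.sdiff_subset)
      · rintro N (rfl | hN)
        · exact ⟨x, rfl⟩
        · exact hs.prop.2 N hN
    have hmem : (ℤ ∙ x) ∈ s := hs.le_of_ge hins (Set.subset_insert _ _) (Set.mem_insert _ _)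
    have := hdis.eq_bot_of_le (le_sSup hmem)
    rw [Submodule.span_singleton_eq_bot] at this
    exact hx this
  have hind := (sSupIndep_iff s).1 hs.prop.1
  have hinj := hind.dfinsupp_lsum_injective
  set L := (DFinsupp.lsum ℕ (M := fun i : s => (i : Submodule ℤ H)) fun i : s => (i : Submodule ℤ H).subtype) with hL
  have hg : ∀ i : s, ∃ g : (i : Submodule ℤ H) →ₗ[ℤ] (ℚ × AddCircle (1:ℚ)), Function.Injective g := by
    rintro ⟨N, hN⟩
    obtain ⟨a, rfl⟩ := hs.prop.2 N hN
    exact bs_cyclic_embed a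
  choose g hg using hg
  let G : (Π₀ i : s, (i : Submodule ℤ H)) →ₗ[ℤ] (s →₀ (ℚ × AddCircle (1:ℚ))) :=
    DFinsupp.lsum ℕ (fun i : s => (Finsupp.lsingle i).comp (g i))
  have hG : ∀ v i, G v i = g i (v i) := by
    intro v i
    induction v using DFinsupp.induction with
    | h0 => simp
    | ha k b f _ _ ih =>
      rw [map_add, Finsupp.add_apply, ih, DFinsupp.add_apply, map_add]
      congr 1
      simp only [G, DFinsupp.lsum_single, LinearMap.comp_apply, Finsupp.lsingle_apply]
      by_cases h : k = i
      · subst h; simp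
      · rw [Finsupp.single_eq_of_ne (Ne.symm h), DFinsupp.single_eq_of_ne (Ne.symm h), map_zero]
  have hGinj : ∀ v, G v = 0 → v = 0 := by
    intro v hv
    ext i : 1
    apply hg i
    rw [← hG, hv]; simp
  letI : DivisibleBy (s →₀ (ℚ × AddCircle (1:ℚ))) ℤ := by
    refine divisibleByOfSMulRightSurj _ _ ?_
    intro n hn y
    refine ⟨Finsupp.mapRange (fun x => if x = 0 then 0 else DivisibleBy.div x n) (if_pos rfl) y, ?_⟩
    ext1 i
    simp only [Finsupp.smul_apply, Finsupp.mapRange_apply]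
    split_ifs with h
    · rw [h, smul_zero]
    · exact DivisibleBy.div_cancel _ hn
  have hB := Module.Baer.of_divisible (A := s →₀ (ℚ × AddCircle (1:ℚ)))
  obtain ⟨j, hj⟩ := hB.extension_property_addMonoidHom L.toAddMonoidHom hinj G.toAddMonoidHom
  refine ⟨s, j, ?_⟩
  rw [injective_iff_map_eq_zero]
  intro x hx
  by_contra h0
  obtain ⟨k, hk, hmem⟩ := hess x h0
  rw [sSup_eq_iSup', Submodule.iSup_eq_range_dfinsupp_lsum] at hmem
  obtain ⟨v, hv⟩ := hmem
  have : G v = j (L v) := (DFunLike.congr_fun hj v).symm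
  have h2 : L v = k • x := hv
  rw [h2, map_zsmul, hx, smul_zero] at this
  rw [hGinj v this, map_zero] at h2
  exact hk h2.symm

theorem bs_circle_big (t : AddCircle (1:ℝ)) (ht : t ≠ 0) : ∃ n : ℕ, 1/4 ≤ ‖n • t‖ := by
  obtain ⟨r, rfl, hr⟩ : ∃ r : ℝ, (r : AddCircle (1:ℝ)) = t ∧ |r| ≤ 1/2 := by
    induction t using QuotientAddGroup.induction_on with
    | H x =>
      refine ⟨x - round x, ?_, abs_sub_round x⟩
      rw [AddCircle.coe_sub]
      have : ((round x : ℝ) : AddCircle (1:ℝ)) = 0 := by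
        rw [AddCircle.coe_eq_zero_iff]; exact ⟨round x, by simp⟩
      rw [this, sub_zero]
  have hr0 : 0 < |r| := by
    rw [abs_pos]; rintro rfl; exact ht (by simp)
  have key : ∀ n : ℕ, (n : ℝ) * |r| ≤ 1/2 → ‖n • (r : AddCircle (1:ℝ))‖ = n * |r| := by
    intro n hn
    rw [← AddCircle.coe_nsmul, (AddCircle.norm_coe_eq_abs_iff (1:ℝ) one_ne_zero).2]
    · simp [abs_mul]
    · simpa [abs_mul] using hn
  by_cases h4 : 1/4 ≤ |r|
  · refine ⟨1, ?_⟩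
    rw [key 1 (by simpa using hr)]; simpa using h4
  · push Not at h4
    refine ⟨⌈1 / (4 * |r|)⌉₊, ?_⟩
    have h1 : 1 / (4 * |r|) * |r| = 1/4 := by field_simp
    have h2 := Nat.le_ceil (1 / (4 * |r|))
    have h3 := Nat.ceil_lt_add_one (a := 1 / (4 * |r|)) (by positivity)
    rw [key]
    · nlinarith
    · nlinarith

theorem bs_char {G : Type*} [AddCommGroup G] (y : G) (hy : y ≠ 0) :
    ∃ χ : G →+ AddCircle (1:ℝ), 1/4 ≤ ‖χ y‖ := by
  obtain ⟨c, hc⟩ := CharacterModule.exists_character_apply_ne_zero_of_ne_zero hy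
  let ι : AddCircle (1:ℚ) →+ AddCircle (1:ℝ) :=
    QuotientAddGroup.map _ _ (Rat.castHom ℝ).toAddMonoidHom (by
      rintro x ⟨k, rfl⟩
      exact ⟨k, by simp⟩)
  have hι : ∀ x, ι x = 0 → x = 0 := by
    intro x
    induction x using QuotientAddGroup.induction_on with
    | H x =>
      intro h
      have h' : (((x:ℚ):ℝ) : AddCircle (1:ℝ)) = 0 := h
      rw [AddCircle.coe_eq_zero_iff] at h'
      obtain ⟨k, hk⟩ := h'
      apply (AddCircle.coe_eq_zero_iff (1:ℚ)).2
      refine ⟨k, ?_⟩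
      simp at hk ⊢
      exact_mod_cast hk
  obtain ⟨n, hn⟩ := bs_circle_big (ι (c y)) (fun h => hc (hι _ h))
  exact ⟨n • (ι.comp c), hn⟩

theorem bs_cont_aux {G H : Type*} [AddCommGroup G] [AddCommGroup H] (f : G → H)
    (hf : @Continuous _ _ (bohrTopology G) (bohrTopology H) f)
    (ψ : H →+ AddCircle (1:ℝ)) (ε : ℝ) (hε : 0 < ε) (x : G) :
    ∃ Φ : Finset (G →+ AddCircle (1:ℝ)), ∀ y, (∀ φ ∈ Φ, φ y = φ x) → ‖ψ (f y - f x)‖ < ε := by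
  letI := bohrTopology G
  letI := bohrTopology H
  have hψ : Continuous ψ := continuous_iInf_dom (i := ψ) continuous_induced_dom
  have hc : Continuous (fun y => ψ (f y)) := hψ.comp hf
  have hmem : {y | ‖ψ (f y) - ψ (f x)‖ < ε} ∈ nhds x := by
    have := hc.continuousAt (x := x) (Metric.ball_mem_nhds _ hε)
    filter_upwards [this] with y hy
    rwa [Set.mem_preimage, mem_ball_iff_norm] at hy
  have hn : nhds x = ⨅ χ : G →+ AddCircle (1:ℝ), Filter.comap χ (nhds (χ x)) := by
    have : @nhds G (bohrTopology G) x = _ := nhds_iInf (ι := G →+ AddCircle (1:ℝ)) (a := x)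
    rw [this]
    simp_rw [nhds_induced]
  rw [hn, Filter.mem_iInf_finite] at hmem
  obtain ⟨Φ, hΦ⟩ := hmem
  refine ⟨Φ, fun y hy => ?_⟩
  have : pure y ≤ ⨅ φ ∈ Φ, Filter.comap (φ : G → AddCircle (1:ℝ)) (nhds (φ x)) := by
    refine le_iInf₂ fun φ hφ => ?_
    rw [← Filter.map_le_iff_le_comap, Filter.map_pure, hy φ hφ]
    exact pure_le_nhds _
  have h2 := this hΦ
  rw [map_sub]
  exact h2

theorem bs_cont (p : ℕ) (hp : p.Prime) {κ H : Type*} [AddCommGroup H] (f : (κ →₀ ZMod p) → H)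
    (hf : @Continuous _ _ (bohrTopology (κ →₀ ZMod p)) (bohrTopology H) f)
    (ψ : H →+ AddCircle (1:ℝ)) (ε : ℝ) (hε : 0 < ε) (x : κ →₀ ZMod p) :
    ∃ (C : Type) (_ : Finite C) (col : κ → C), ∀ Y Z : Finset κ,
      p ∣ Y.card → p ∣ Z.card → (∃ γ, ∀ a ∈ Y, col a = γ) → (∃ γ, ∀ a ∈ Z, col a = γ) →
      ‖ψ (f (x + (∑ a ∈ Y, Finsupp.single a 1 + ∑ a ∈ Z, Finsupp.single a 1)) - f x)‖ < ε := by
  classical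
  obtain ⟨Φ, hΦ⟩ := bs_cont_aux f hf ψ ε hε x
  have : Fact ((0:ℝ) < 1) := ⟨one_pos⟩
  have hfin := AddCircle.finite_torsion (1:ℝ) hp.pos
  have hft : Finite {t : AddCircle (1:ℝ) | p • t = 0} := hfin
  let e := Φ.equivFin
  have htor : ∀ (φ : (κ →₀ ZMod p) →+ AddCircle (1:ℝ)) a, p • φ (Finsupp.single a 1) = 0 := by
    intro φ a
    rw [← map_nsmul]
    simp
  refine ⟨Fin Φ.card → {t : AddCircle (1:ℝ) | p • t = 0}, inferInstance,
    fun a i => ⟨(e.symm i).1 (Finsupp.single a 1), htor _ _⟩, fun Y Z hYc hZc hY hZ => hΦ _ ?_⟩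
  intro φ hφ
  have key : ∀ Y : Finset κ, p ∣ Y.card → (∃ γ, ∀ a ∈ Y, (fun i => ⟨(e.symm i).1 (Finsupp.single a 1), htor _ _⟩ :
      Fin Φ.card → {t : AddCircle (1:ℝ) | p • t = 0}) = γ) →
      ∑ a ∈ Y, φ (Finsupp.single a 1) = 0 := by
    rintro Y ⟨k, hk⟩ ⟨γ, hγ⟩
    have h1 : ∀ a ∈ Y, φ (Finsupp.single a 1) = (γ (e ⟨φ, hφ⟩)).1 := by
      intro a ha
      rw [← hγ a ha]
      simp
    rw [Finset.sum_congr rfl h1, Finset.sum_const, hk, mul_comm, mul_smul]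
    have := (γ (e ⟨φ, hφ⟩)).2
    rw [Set.mem_setOf_eq] at this
    rw [this, smul_zero]
  rw [map_add, map_add, map_sum, map_sum, add_eq_left, key Y hYc hY, key Z hZc hZ, add_zero]

theorem bs_hom {I K : Type*} [Finite K] (n : ℕ) (ξ : K → Finset ℕ → I) :
    ∃ e : ℕ → ℕ, StrictMono e ∧ ∀ (θ : ℕ → ℕ), StrictMono θ → ∀ (A B : Finset ℕ),
      A.card = n → B.card = n → ∀ k l,
      (ξ k ((A.image θ).image e) = ξ l ((B.image θ).image e) ↔
        ξ k (A.image e) = ξ l (B.image e)) := by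
  classical
  let N := 2 * n
  let enum : Finset ℕ → Fin N → ℕ := fun Z =>
    if h : Z.card = N then Z.orderEmbOfFin h else fun _ => 0
  have henum : ∀ (W : Finset ℕ) (g : ℕ → ℕ), StrictMono g → W.card = N →
      enum (W.image g) = g ∘ enum W := by
    intro W g hg hW
    have h2 : (W.image g).card = N := by rw [Finset.card_image_of_injective _ hg.injective, hW]
    simp only [enum, hW, h2, dif_pos]
    symm
    apply Finset.orderEmbOfFin_unique
    · intro i
      exact Finset.mem_image_of_mem _ (Finset.orderEmbOfFin_mem _ _ _)
    · exact hg.comp (W.orderEmbOfFin hW).strictMono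
  have hrange : ∀ (W : Finset ℕ), W.card = N → ∀ x ∈ W, ∃ i, enum W i = x := by
    intro W hW x hx
    have := Finset.range_orderEmbOfFin W hW
    have hx' : x ∈ Set.range (W.orderEmbOfFin hW) := by rw [this]; exact hx
    obtain ⟨i, hi⟩ := hx'
    exact ⟨i, by simp only [enum, hW, dif_pos]; exact hi⟩
  let c : Finset ℕ → (K × K × Finset (Fin N) × Finset (Fin N) → Prop) := fun Z q =>
    ξ q.1 (q.2.2.1.image (enum Z)) = ξ q.2.1 (q.2.2.2.image (enum Z))
  obtain ⟨S, hS, γ, hγ⟩ := bs_ramsey N c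
  refine ⟨Nat.nth (· ∈ S), Nat.nth_strictMono hS, ?_⟩
  set e := Nat.nth (· ∈ S) with he
  have hemono : StrictMono e := Nat.nth_strictMono hS
  have heS : ∀ i, e i ∈ S := fun i => Nat.nth_mem_of_infinite hS i
  intro θ hθ A B hA hB k l
  obtain ⟨W, hABW, hW⟩ : ∃ W : Finset ℕ, A ∪ B ⊆ W ∧ W.card = N := by
    apply Infinite.exists_superset_card_eq
    have := Finset.card_union_le A B
    omega
  have hcol : ∀ g : ℕ → ℕ, StrictMono g → (∀ i, g i ∈ S) → c (W.image g) = γ := by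
    intro g hg hgS
    apply hγ
    · rw [Finset.card_image_of_injective _ hg.injective, hW]
    · intro x hx
      rw [Finset.mem_coe, Finset.mem_image] at hx
      obtain ⟨y, _, rfl⟩ := hx
      exact hgS y
  have h1 := (hcol (e ∘ θ) (hemono.comp hθ) (fun i => heS _)).trans (hcol e hemono heS).symm
  have himg : ∀ D : Finset ℕ, D ⊆ W → ∀ g : ℕ → ℕ, StrictMono g →
      (Finset.univ.filter (fun i => enum W i ∈ D)).image (enum (W.image g)) = D.image g := by
    intro D hD g hg
    rw [henum W g hg hW]
    ext x
    simp only [Finset.mem_image, Finset.mem_filter, Finset.mem_univ, true_and, Function.comp]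
    constructor
    · rintro ⟨i, hi, rfl⟩
      exact ⟨_, hi, rfl⟩
    · rintro ⟨y, hy, rfl⟩
      obtain ⟨i, rfl⟩ := hrange W hW y (hD hy)
      exact ⟨i, hy, rfl⟩
  have hAW := Finset.union_subset_left hABW
  have hBW := Finset.union_subset_right hABW
  have h2 := congrFun h1 (k, l, Finset.univ.filter (fun i => enum W i ∈ A),
    Finset.univ.filter (fun i => enum W i ∈ B))
  simp only [c] at h2
  rw [himg A hAW _ (hemono.comp hθ), himg B hBW _ (hemono.comp hθ), himg A hAW _ hemono,
    himg B hBW _ hemono] at h2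
  rw [Finset.image_image, Finset.image_image]
  exact iff_of_eq h2

/-- doubling with a marker at `α` -/
def bsTh (α x : ℕ) : ℕ := 2 * x + if x = α then 1 else 0

theorem bsTh_mono (α : ℕ) : StrictMono (bsTh α) := by
  intro x y h
  simp only [bsTh]
  split_ifs <;> omega

open Classical in
/-- essential coordinates -/
noncomputable def bsI {I K : Type*} (n : ℕ) (ξ : K → (ℕ → ℕ) → I) (k : K) : Finset ℕ :=
  (Finset.range n).filter (fun j => ξ k (fun x => 2 * x) ≠ ξ k (bsTh j))

theorem bs_strictMono_dbl {s : ℕ → ℕ} (hs : StrictMono s) :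
    StrictMono (fun y => 2 * s (y / 2) + y % 2) := by
  apply strictMono_nat_of_lt_succ
  intro y
  rcases Nat.even_or_odd' y with ⟨z, rfl | rfl⟩
  · have h1 : (2 * z) / 2 = z := by omega
    have h2 : (2 * z + 1) / 2 = z := by omega
    simp only [h1, h2]; omega
  · have h1 : (2 * z + 1) / 2 = z := by omega
    have h2 : (2 * z + 1 + 1) / 2 = z + 1 := by omega
    have : s z < s (z + 1) := hs (Nat.lt_succ_self z)
    simp only [h1, h2]; omega

theorem bs_two_mono : StrictMono (fun x : ℕ => 2 * x) := by
  intro x y h; simp only; omega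

theorem bsI_iff {I K : Type*} {n : ℕ} {ξ : K → (ℕ → ℕ) → I}
    (hom : ∀ k l (θ s t : ℕ → ℕ), StrictMono θ → StrictMono s → StrictMono t →
      (ξ k (θ ∘ s) = ξ l (θ ∘ t) ↔ ξ k s = ξ l t))
    (k : K) (s : ℕ → ℕ) (hs : StrictMono s) (j : ℕ) (hj : j < n) :
    j ∈ bsI n ξ k ↔ ξ k (fun x => 2 * s x) ≠ ξ k (fun x => bsTh (s j) (s x)) := by
  have h := hom k k (fun y => 2 * s (y / 2) + y % 2) (fun x => 2 * x) (bsTh j)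
    (bs_strictMono_dbl hs) bs_two_mono (bsTh_mono j)
  have e1 : (fun y => 2 * s (y / 2) + y % 2) ∘ (fun x => 2 * x) = (fun x => 2 * s x) := by
    funext x
    have h1 : (2 * x) / 2 = x := by omega
    simp only [Function.comp, h1]; omega
  have e2 : (fun y => 2 * s (y / 2) + y % 2) ∘ (bsTh j) = (fun x => bsTh (s j) (s x)) := by
    funext x
    simp only [Function.comp, bsTh, hs.injective.eq_iff]
    split_ifs with hx
    · have h1 : (2 * x + 1) / 2 = x := by omega
      rw [h1]; omega
    · have h1 : (2 * x + 0) / 2 = x := by omega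
      rw [h1]; omega
  rw [e1, e2] at h
  simp [bsI, hj, h]

theorem bs_canon_b_aux {I K : Type*} {n : ℕ} {ξ : K → (ℕ → ℕ) → I}
    (hcong : ∀ k s t, (∀ i < n, s i = t i) → ξ k s = ξ k t)
    (hom : ∀ k l (θ s t : ℕ → ℕ), StrictMono θ → StrictMono s → StrictMono t →
      (ξ k (θ ∘ s) = ξ l (θ ∘ t) ↔ ξ k s = ξ l t))
    (k l : K) (s t : ℕ → ℕ) (hs : StrictMono s) (ht : StrictMono t)
    (h : ξ k s = ξ l t) : (bsI n ξ k).image s ⊆ (bsI n ξ l).image t := by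
  classical
  intro α hα
  obtain ⟨j, hj, rfl⟩ := Finset.mem_image.1 hα
  have hjn : j < n := by
    have := hj; simp only [bsI, Finset.mem_filter, Finset.mem_range] at this; exact this.1
  by_contra hcon
  have h1 : ξ k (fun x => 2 * s x) = ξ l (fun x => 2 * t x) :=
    (hom k l (fun x => 2 * x) s t bs_two_mono hs ht).2 h
  have h2 : ξ k (fun x => bsTh (s j) (s x)) = ξ l (fun x => bsTh (s j) (t x)) :=
    (hom k l (bsTh (s j)) s t (bsTh_mono _) hs ht).2 h
  have h3 : ξ l (fun x => 2 * t x) = ξ l (fun x => bsTh (s j) (t x)) := by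
    by_cases hex : ∃ i < n, t i = s j
    · obtain ⟨i, hi, hti⟩ := hex
      have : i ∉ bsI n ξ l := fun hmem => hcon (Finset.mem_image.2 ⟨i, hmem, hti⟩)
      rw [bsI_iff hom l t ht i hi] at this
      push Not at this
      rw [← hti]; exact this
    · push Not at hex
      apply hcong
      intro i hi
      simp [bsTh, hex i hi]
  exact (bsI_iff hom k s hs j hjn).1 hj (h1.trans (h3.trans h2.symm))

theorem bs_canon_b {I K : Type*} {n : ℕ} {ξ : K → (ℕ → ℕ) → I}
    (hcong : ∀ k s t, (∀ i < n, s i = t i) → ξ k s = ξ k t)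
    (hom : ∀ k l (θ s t : ℕ → ℕ), StrictMono θ → StrictMono s → StrictMono t →
      (ξ k (θ ∘ s) = ξ l (θ ∘ t) ↔ ξ k s = ξ l t))
    (k l : K) (s t : ℕ → ℕ) (hs : StrictMono s) (ht : StrictMono t)
    (h : ξ k s = ξ l t) : (bsI n ξ k).image s = (bsI n ξ l).image t :=
  (bs_canon_b_aux hcong hom k l s t hs ht h).antisymm
    (bs_canon_b_aux hcong hom l k t s ht hs h.symm)

theorem bs_canon_move {I K : Type*} {n : ℕ} {ξ : K → (ℕ → ℕ) → I}
    (hom : ∀ k l (θ s t : ℕ → ℕ), StrictMono θ → StrictMono s → StrictMono t →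
      (ξ k (θ ∘ s) = ξ l (θ ∘ t) ↔ ξ k s = ξ l t))
    (k : K) (s : ℕ → ℕ) (hs : StrictMono s) (j x : ℕ) (hjn : j < n)
    (hj : j ∉ bsI n ξ k) (h1 : s j < x) (h2 : x < s (j + 1)) (t : ℕ → ℕ) (htm : StrictMono t)
    (ht : ∀ y, t y = if y = j then x else s y) : ξ k s = ξ k t := by
  have hj' : ξ k (fun x => 2 * x) = ξ k (bsTh j) := by
    by_contra h; apply hj; simp [bsI, hjn, h]
  let μ : ℕ → ℕ := fun y => if y = 2 * j + 1 then 2 * x else 2 * s (y / 2) + y % 2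
  have hμ : StrictMono μ := by
    apply strictMono_nat_of_lt_succ
    intro y
    have h0 : 2 * s (y / 2) + y % 2 < 2 * s ((y + 1) / 2) + (y + 1) % 2 :=
      bs_strictMono_dbl hs (Nat.lt_succ_self y)
    simp only [μ]
    split_ifs with ha hb hb
    · omega
    · subst ha
      have : (2 * j + 1 + 1) / 2 = j + 1 := by omega
      rw [this]; omega
    · have h3 : y = 2 * j := by omega
      subst h3
      have : (2 * j) / 2 = j := by omega
      rw [this]; omega
    · exact h0
  have h := (hom k k μ (fun x => 2 * x) (bsTh j) hμ bs_two_mono (bsTh_mono j)).2 hj'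
  have e1 : μ ∘ (fun x => 2 * x) = (fun x => 2 * x) ∘ s := by
    funext y
    have h1 : (2 * y) / 2 = y := by omega
    have h2 : ¬ (2 * y = 2 * j + 1) := by omega
    simp only [μ, Function.comp, h1, h2, if_false]; omega
  have e2 : μ ∘ (bsTh j) = (fun x => 2 * x) ∘ t := by
    funext y
    simp only [Function.comp, bsTh, μ, ht]
    by_cases hy : y = j
    · subst hy; simp
    · have h1 : (2 * y) / 2 = y := by omega
      have h2 : ¬ (2 * y = 2 * j + 1) := by omega
      simp only [hy, if_false, add_zero, h1, h2]; omega
  rw [e1, e2] at h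
  exact (hom k k (fun x => 2 * x) s t bs_two_mono hs htm).1 h

theorem bs_canon_a_le {I K : Type*} {n : ℕ} {ξ : K → (ℕ → ℕ) → I}
    (hcong : ∀ k s t, (∀ i < n, s i = t i) → ξ k s = ξ k t)
    (hom : ∀ k l (θ s t : ℕ → ℕ), StrictMono θ → StrictMono s → StrictMono t →
      (ξ k (θ ∘ s) = ξ l (θ ∘ t) ↔ ξ k s = ξ l t))
    (k : K) (s t : ℕ → ℕ) (hs : StrictMono s) (ht : StrictMono t)
    (hle : ∀ i, s i ≤ t i) (hag : ∀ i ∈ bsI n ξ k, s i = t i) : ξ k s = ξ k t := by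
  let r : ℕ → ℕ → ℕ := fun i x => if x < i then s x else t x
  have hr : ∀ i, StrictMono (r i) := by
    intro i
    apply strictMono_nat_of_lt_succ
    intro y
    have := hs (Nat.lt_succ_self y)
    have := ht (Nat.lt_succ_self y)
    have := hle y
    have := hle (y + 1)
    simp only [r]
    simp only [Nat.succ_eq_add_one] at *
    split_ifs <;> omega
  have hstep : ∀ i, i ≤ n → ξ k (r i) = ξ k t := by
    intro i
    induction i with
    | zero => intro _; congr 1
    | succ i ih =>
      intro hi
      rw [← ih (by omega)]
      by_cases he : s i = t i
      · congr 1
        funext y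
        simp only [r]
        by_cases hy : y = i
        · subst hy; simp [he]
        · split_ifs <;> first | rfl | omega
      · have hI : i ∉ bsI n ξ k := fun h => he (hag i h)
        refine bs_canon_move hom k (r (i+1)) (hr _) i (t i) (by omega) hI ?_ ?_ (r i) (hr _) ?_
        · have := hle i
          simp only [r]; rw [if_pos (by omega)]; omega
        · simp only [r]; rw [if_neg (by omega)]; exact ht (Nat.lt_succ_self i)
        · intro y
          simp only [r]
          by_cases hy : y = i
          · subst hy; simp
          · rw [if_neg hy]; split_ifs <;> first | rfl | omega
  rw [← hstep n le_rfl]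
  apply hcong
  intro i hi
  simp [r, hi]

theorem bs_canon_a {I K : Type*} {n : ℕ} {ξ : K → (ℕ → ℕ) → I}
    (hcong : ∀ k s t, (∀ i < n, s i = t i) → ξ k s = ξ k t)
    (hom : ∀ k l (θ s t : ℕ → ℕ), StrictMono θ → StrictMono s → StrictMono t →
      (ξ k (θ ∘ s) = ξ l (θ ∘ t) ↔ ξ k s = ξ l t))
    (k : K) (s t : ℕ → ℕ) (hs : StrictMono s) (ht : StrictMono t)
    (hag : ∀ i ∈ bsI n ξ k, s i = t i) : ξ k s = ξ k t := by
  have hm : StrictMono (fun i => max (s i) (t i)) := by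
    intro i j hij
    exact max_lt_max (hs hij) (ht hij)
  rw [bs_canon_a_le hcong hom k s _ hs hm (fun i => le_max_left _ _)
      (fun i hi => by simp [hag i hi]),
    bs_canon_a_le hcong hom k t _ ht hm (fun i => le_max_right _ _)
      (fun i hi => by simp [hag i hi])]

/-- a directed version of the Rado graph -/
def bsR (a n : ℕ) : Prop := a ∈ (Denumerable.ofNat (Finset ℕ) n.unpair.1)

theorem bsR_ext (N : ℕ) (τ : ℕ → Prop) : ∃ n, N ≤ n ∧ ∀ a < N, (bsR a n ↔ τ a) := by
  classical
  obtain ⟨m, hm⟩ : ∃ m, Denumerable.ofNat (Finset ℕ) m = (Finset.range N).filter τ :=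
    ⟨_, Denumerable.ofNat_encode _⟩
  refine ⟨Nat.pair m N, Nat.right_le_pair _ _, ?_⟩
  intro a ha
  simp [bsR, ha, hm]

theorem bs_rado_good {C : Type*} [Finite C] (col : ℕ → C) :
    ∃ (γ : C) (N0 : ℕ) (τ0 : ℕ → Prop), ∀ N, N0 ≤ N → ∀ τ : ℕ → Prop, (∀ a < N0, (τ a ↔ τ0 a)) →
      ∃ n, N ≤ n ∧ col n = γ ∧ ∀ a < N, (bsR a n ↔ τ a) := by
  classical
  by_contra! hcon
  have key : ∀ G : Finset C, ∃ (N : ℕ) (τ : ℕ → Prop), ∀ γ ∈ G, ∀ n, N ≤ n → col n = γ →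
      ¬ (∀ a < N, (bsR a n ↔ τ a)) := by
    intro G
    induction G using Finset.induction_on with
    | empty => exact ⟨0, fun _ => True, by simp⟩
    | insert γ G hγ ih =>
      obtain ⟨N, τ, h⟩ := ih
      obtain ⟨N', hN', τ', hτ', h'⟩ := hcon γ N τ
      refine ⟨N', τ', ?_⟩
      intro γ' hγ' n hn hcol hall
      rcases Finset.mem_insert.1 hγ' with rfl | hmem
      · obtain ⟨a, ha, hna⟩ := h' n hn hcol
        have := hall a ha
        tauto
      · refine h γ' hmem n (hN'.trans hn) hcol ?_
        intro a ha
        exact (hall a (lt_of_lt_of_le ha hN')).trans (hτ' a ha)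
  have := Fintype.ofFinite C
  obtain ⟨N, τ, h⟩ := key Finset.univ
  obtain ⟨n, hn, h2⟩ := bsR_ext N τ
  exact h (col n) (Finset.mem_univ _) n hn rfl h2

theorem bs_rado {C : Type*} [Finite C] (col : ℕ → C) (P : ℕ → ℕ → Prop) :
    ∃ s : ℕ → ℕ, StrictMono s ∧ (∃ γ, ∀ i, col (s i) = γ) ∧
      ∀ a b, a < b → (bsR (s a) (s b) ↔ P a b) := by
  classical
  obtain ⟨γ, N0, τ0, hgood⟩ := bs_rado_good col
  obtain ⟨s, hs⟩ := bs_rec (W := ℕ) (K := ℕ) (fun ξ X z => N0 ≤ z ∧ col z = γ ∧ (∀ η, X η < z) ∧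
      ((∀ η, N0 ≤ X η) → Function.Injective X → ∀ η, (bsR (X η) z ↔ P η ξ))) (by
    intro ξ X
    obtain ⟨M, hM⟩ := (Set.finite_range X).bddAbove
    obtain ⟨n, hn, hcol, hR⟩ := hgood (max N0 (M + 1)) (le_max_left _ _)
      (fun x => if x < N0 then τ0 x else ∃ η, X η = x ∧ P η ξ) (by intro a ha; simp [ha])
    have hXM : ∀ η, X η ≤ M := fun η => hM ⟨η, rfl⟩
    refine ⟨n, (le_max_left _ _).trans hn, hcol, ?_, ?_⟩
    · intro η
      have := hXM η
      have := (le_max_right N0 (M+1)).trans hn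
      omega
    · intro hN hinj η
      have h1 : X η < max N0 (M + 1) := lt_of_lt_of_le (Nat.lt_succ_of_le (hXM η)) (le_max_right _ _)
      rw [hR _ h1, if_neg (by have := hN η; omega)]
      constructor
      · rintro ⟨η', h, hP⟩
        rw [← hinj h]; exact hP
      · intro h; exact ⟨η, rfl, h⟩)
  have hmono : StrictMono s := fun a b hab => (hs b).2.2.1 ⟨a, hab⟩
  refine ⟨s, hmono, ⟨γ, fun i => (hs i).2.1⟩, ?_⟩
  intro a b hab
  refine (hs b).2.2.2 (fun η => (hs η).1) ?_ ⟨a, hab⟩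
  intro x y hxy
  exact Subtype.ext (hmono.injective hxy)

/-- the continuity property of the colouring -/
def BsP2 (p : ℕ) {I Q : Type*} [AddCommGroup Q] (F : Finset ℕ → (I →₀ Q)) : Prop :=
  ∀ (χ : (I →₀ Q) →+ AddCircle (1:ℝ)) (ε : ℝ), 0 < ε → ∀ x : Finset ℕ,
    ∃ (C : Type) (_ : Finite C) (col : ℕ → C), ∀ Y Z : Finset ℕ,
      Disjoint x Y → Disjoint x Z → Disjoint Y Z →
      p ∣ Y.card → p ∣ Z.card → (∃ γ, ∀ a ∈ Y, col a = γ) → (∃ γ, ∀ a ∈ Z, col a = γ) →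
      ‖χ (F (x ∪ (Y ∪ Z)) - F x)‖ < ε

theorem bs_eq_of_image (J : Finset ℕ) (s t : ℕ → ℕ) (hs : StrictMono s) (ht : StrictMono t)
    (h : J.image s = J.image t) : ∀ i ∈ J, s i = t i := by
  have hc : (J.image s).card = J.card := Finset.card_image_of_injective _ hs.injective
  have h1 : s ∘ J.orderEmbOfFin rfl = (J.image s).orderEmbOfFin hc := by
    apply Finset.orderEmbOfFin_unique
    · intro i; exact Finset.mem_image_of_mem _ (Finset.orderEmbOfFin_mem _ _ _)
    · exact hs.comp (J.orderEmbOfFin rfl).strictMono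
  have h2 : t ∘ J.orderEmbOfFin rfl = (J.image s).orderEmbOfFin hc := by
    apply Finset.orderEmbOfFin_unique
    · intro i; rw [h]; exact Finset.mem_image_of_mem _ (Finset.orderEmbOfFin_mem _ _ _)
    · exact ht.comp (J.orderEmbOfFin rfl).strictMono
  intro i hi
  have hi' : i ∈ Set.range (J.orderEmbOfFin rfl) := by
    rw [Finset.range_orderEmbOfFin]; exact hi
  obtain ⟨j, rfl⟩ := hi'
  exact congrFun (h1.trans h2.symm) j

theorem bs_kill {I K Q : Type*} [AddCommGroup Q] [Fintype K] {p n : ℕ} (hn : n = 2 * p)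
    {ξ : K → (ℕ → ℕ) → I}
    (hcong : ∀ k s t, (∀ i < n, s i = t i) → ξ k s = ξ k t)
    (hom : ∀ k l (θ s t : ℕ → ℕ), StrictMono θ → StrictMono s → StrictMono t →
      (ξ k (θ ∘ s) = ξ l (θ ∘ t) ↔ ξ k s = ξ l t))
    (F : Finset ℕ → (I →₀ Q)) (hF0 : F ∅ = 0) (hP2 : BsP2 p F)
    (l : K → Q) (hl : ∀ k, l k ≠ 0)
    (hinj : ∀ s, StrictMono s → Function.Injective (fun k => ξ k s))
    (hF : ∀ s, StrictMono s → F ((Finset.range n).image s) = ∑ k, Finsupp.single (ξ k s) (l k))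
    (k0 : K) : (bsI n ξ k0).card = 1 := by
  classical
  by_contra hd
  obtain ⟨ψ, hψ⟩ := bs_char (l k0) (hl k0)
  let Cl : Finset ℕ → Prop := fun A => ∀ a ∈ A, ∀ b ∈ A, a < b → bsR a b
  let cond : I → Prop := fun i => ∃ t, StrictMono t ∧ Cl ((bsI n ξ k0).image t) ∧ ξ k0 t = i
  let χ : (I →₀ Q) →+ AddCircle (1:ℝ) :=
    Finsupp.liftAddHom (fun i => if cond i then ψ else 0)
  obtain ⟨C, _, col, hcol⟩ := hP2 χ (1/4) (by norm_num) ∅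
  obtain ⟨s, hs, ⟨γ, hγ⟩, hR⟩ := bs_rado col (fun a b => a ∈ bsI n ξ k0 ∧ b ∈ bsI n ξ k0)
  have h1 := hcol ((Finset.range n).image s) ∅ (by simp) (by simp) (by simp)
    (by rw [Finset.card_image_of_injective _ hs.injective, Finset.card_range, hn]; exact ⟨2, by ring⟩)
    (by simp) ⟨γ, by
      intro a ha
      obtain ⟨i, _, rfl⟩ := Finset.mem_image.1 ha
      exact hγ i⟩ ⟨γ, by simp⟩
  rw [hF0, sub_zero, Finset.empty_union, Finset.union_empty, hF s hs, map_sum] at h1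
  have h2 : ∀ k, χ (Finsupp.single (ξ k s) (l k)) = if cond (ξ k s) then ψ (l k) else 0 := by
    intro k
    simp only [χ, Finsupp.liftAddHom_apply_single]
    split_ifs <;> simp
  simp only [h2] at h1
  rw [Finset.sum_eq_single k0] at h1
  · rw [if_pos] at h1
    · linarith
    · refine ⟨s, hs, ?_, rfl⟩
      intro a ha b hb hab
      obtain ⟨i, hi, rfl⟩ := Finset.mem_image.1 ha
      obtain ⟨j, hj, rfl⟩ := Finset.mem_image.1 hb
      exact (hR i j (hs.lt_iff_lt.1 hab)).2 ⟨hi, hj⟩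
  · intro k _ hk
    rw [if_neg]
    rintro ⟨t, ht, hcl, heq⟩
    have himg := bs_canon_b hcong hom k0 k t s ht hs heq
    have hcard : (bsI n ξ k).card = (bsI n ξ k0).card := by
      have := congrArg Finset.card himg
      rw [Finset.card_image_of_injective _ hs.injective,
        Finset.card_image_of_injective _ ht.injective] at this
      exact this.symm
    have hsub : bsI n ξ k ⊆ bsI n ξ k0 := by
      intro a ha
      have h3 : 1 < (bsI n ξ k).card := by
        have : 0 < (bsI n ξ k).card := Finset.card_pos.2 ⟨a, ha⟩
        omega
      obtain ⟨b, hb, hba⟩ := Finset.exists_mem_ne h3 a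
      rw [himg] at hcl
      have hsa := Finset.mem_image_of_mem s ha
      have hsb := Finset.mem_image_of_mem s hb
      rcases lt_or_gt_of_ne hba with hlt | hlt
      · exact ((hR b a hlt).1 (hcl _ hsb _ hsa (hs hlt))).2
      · exact ((hR a b hlt).1 (hcl _ hsa _ hsb (hs hlt))).1
    have hEq : bsI n ξ k = bsI n ξ k0 := Finset.eq_of_subset_of_card_le hsub hcard.ge
    rw [hEq] at himg
    have hag := bs_eq_of_image _ t s ht hs himg
    have h4 := bs_canon_a hcong hom k0 t s ht hs hag
    exact hk (hinj s hs (show ξ k s = ξ k0 s by rw [← heq, h4]))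
  · simp

theorem bs_split {I K Q : Type*} [AddCommGroup Q] [Fintype K] {n : ℕ}
    {ξ : K → (ℕ → ℕ) → I}
    (hcong : ∀ k s t, (∀ i < n, s i = t i) → ξ k s = ξ k t)
    (hom : ∀ k l (θ s t : ℕ → ℕ), StrictMono θ → StrictMono s → StrictMono t →
      (ξ k (θ ∘ s) = ξ l (θ ∘ t) ↔ ξ k s = ξ l t))
    (F : Finset ℕ → (I →₀ Q)) (l : K → Q)
    (hF : ∀ s, StrictMono s → F ((Finset.range n).image s) = ∑ k, Finsupp.single (ξ k s) (l k))
    (hone : ∀ k, (bsI n ξ k).card = 1) :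
    ∃ (h : ℕ → ℕ → (I →₀ Q)) (own : I → ℕ),
      (∀ s, StrictMono s → F ((Finset.range n).image s) = ∑ j ∈ Finset.range n, h j (s j)) ∧
      ∀ j x, j ≤ x → ∀ i ∈ (h j x).support, own i = x := by
  classical
  choose jj hjj using fun k => Finset.card_eq_one.1 (hone k)
  have hjn : ∀ k, jj k ∈ Finset.range n := by
    intro k
    have : jj k ∈ bsI n ξ k := by rw [hjj]; simp
    simp only [bsI, Finset.mem_filter] at this
    exact this.1
  have hb : ∀ k l s t, StrictMono s → StrictMono t → ξ k s = ξ l t → s (jj k) = t (jj l) := by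
    intro k l s t hs ht h
    have := bs_canon_b hcong hom k l s t hs ht h
    rw [hjj, hjj] at this
    simpa using this
  have ha : ∀ k s t, StrictMono s → StrictMono t → s (jj k) = t (jj k) → ξ k s = ξ k t := by
    intro k s t hs ht h
    apply bs_canon_a hcong hom k s t hs ht
    intro i hi
    rw [hjj, Finset.mem_singleton] at hi
    rw [hi, h]
  let σ : ℕ → ℕ → ℕ → ℕ := fun j x y => y + (x - j)
  have hσ : ∀ j x, StrictMono (σ j x) := by
    intro j x a b hab
    simp only [σ]; omega
  have hσj : ∀ j x, j ≤ x → σ j x j = x := by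
    intro j x h; simp only [σ]; omega
  let own : I → ℕ := fun i => if h : ∃ kt : K × (ℕ → ℕ), StrictMono kt.2 ∧ ξ kt.1 kt.2 = i then
    h.choose.2 (jj h.choose.1) else 0
  have hown : ∀ k t, StrictMono t → own (ξ k t) = t (jj k) := by
    intro k t ht
    have hex : ∃ kt : K × (ℕ → ℕ), StrictMono kt.2 ∧ ξ kt.1 kt.2 = ξ k t := ⟨(k, t), ht, rfl⟩
    simp only [own, dif_pos hex]
    exact hb _ _ _ _ hex.choose_spec.1 ht hex.choose_spec.2
  refine ⟨fun j x => ∑ k with jj k = j, Finsupp.single (ξ k (σ j x)) (l k), own, ?_, ?_⟩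
  · intro s hs
    rw [hF s hs, ← Finset.sum_fiberwise_of_maps_to (fun k _ => hjn k)]
    apply Finset.sum_congr rfl
    intro j _
    apply Finset.sum_congr rfl
    intro k hk
    rw [Finset.mem_filter] at hk
    congr 1
    apply ha k _ _ hs (hσ _ _)
    rw [hk.2, hσj _ _ (hs.le_apply)]
  · intro j x hjx i hi
    have h1 := Finsupp.support_finset_sum hi
    rw [Finset.mem_biUnion] at h1
    obtain ⟨k, hk, hik⟩ := h1
    rw [Finset.mem_filter] at hk
    have h2 := Finsupp.support_single_subset hik
    rw [Finset.mem_singleton] at h2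
    rw [h2, hown _ _ (hσ _ _), hk.2, hσj _ _ hjx]

theorem bs_glue {I Q : Type*} [AddCommGroup Q] (own : I → ℕ)
    (χ : ℕ → (I →₀ Q) →+ AddCircle (1:ℝ)) :
    ∃ χ' : (I →₀ Q) →+ AddCircle (1:ℝ), ∀ x y, (∀ i ∈ y.support, own i = x) → χ' y = χ x y := by
  refine ⟨Finsupp.liftAddHom (fun i => (χ (own i)).comp (Finsupp.singleAddHom i)), ?_⟩
  intro x y hy
  conv_rhs => rw [← Finsupp.sum_single y]
  rw [Finsupp.liftAddHom_apply, Finsupp.sum, Finsupp.sum, map_sum]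
  apply Finset.sum_congr rfl
  intro i hi
  rw [hy i hi]
  rfl

theorem bs_pigeon {C : Type*} [Finite C] (X : Set ℕ) (hX : X.Infinite) (col : ℕ → C) :
    ∃ Y ⊆ X, Y.Infinite ∧ ∃ γ, ∀ x ∈ Y, col x = γ := by
  have := hX.to_subtype
  obtain ⟨γ, hγ⟩ := Finite.exists_infinite_fiber (fun x : X => col x)
  refine ⟨Subtype.val '' ((fun x : X => col x) ⁻¹' {γ}), ?_, ?_, γ, ?_⟩
  · rintro _ ⟨x, _, rfl⟩; exact x.2
  · exact (Set.infinite_coe_iff.1 hγ).image Subtype.val_injective.injOn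
  · rintro _ ⟨x, hx, rfl⟩; exact hx

theorem bs_enum (A : Finset ℕ) : ∃ s : ℕ → ℕ, StrictMono s ∧ (Finset.range A.card).image s = A := by
  let s : ℕ → ℕ := fun i => if h : i < A.card then A.orderEmbOfFin rfl ⟨i, h⟩ else A.sup id + 1 + i
  refine ⟨s, ?_, ?_⟩
  · apply strictMono_nat_of_lt_succ
    intro i
    simp only [s]
    split_ifs with h1 h2 h2
    · exact (A.orderEmbOfFin rfl).strictMono (by simp)
    · have := Finset.le_sup (f := id) (Finset.orderEmbOfFin_mem A rfl ⟨i, h1⟩)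
      simp only [id] at this
      omega
    · omega
    · omega
  · ext x
    rw [Finset.mem_image]
    constructor
    · rintro ⟨i, hi, rfl⟩
      rw [Finset.mem_range] at hi
      simp only [s, hi, dif_pos]
      exact Finset.orderEmbOfFin_mem _ _ _
    · intro hx
      have hx' : x ∈ Set.range (A.orderEmbOfFin rfl) := by
        rw [Finset.range_orderEmbOfFin]; exact hx
      obtain ⟨j, rfl⟩ := hx'
      exact ⟨j, by simp, by simp [s]⟩

theorem bs_net (δ : ℝ) (hδ : 0 < δ) : ∃ (t : Set (AddCircle (1:ℝ))) (_ : Finite t)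
    (r : AddCircle (1:ℝ) → t), ∀ y : AddCircle (1:ℝ), dist y (r y : AddCircle (1:ℝ)) < δ := by
  have : Fact ((0:ℝ) < 1) := ⟨one_pos⟩
  obtain ⟨t, -, hfin, ht⟩ := (isCompact_univ (X := AddCircle (1:ℝ))).finite_cover_balls hδ
  have h : ∀ y : AddCircle (1:ℝ), ∃ c : t, dist y c < δ := by
    intro y
    have := ht (Set.mem_univ y)
    simp only [Set.mem_iUnion, Metric.mem_ball] at this
    obtain ⟨c, hc, h⟩ := this
    exact ⟨⟨c, hc⟩, h⟩
  choose r hr using h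
  exact ⟨t, hfin, r, hr⟩

theorem bs_claim2 {I Q : Type*} [AddCommGroup Q] {p n : ℕ} (hp : 0 < p) (hn : n = 2 * p)
    (F : Finset ℕ → (I →₀ Q)) (hF0 : F ∅ = 0) (hP2 : BsP2 p F)
    (h : ℕ → ℕ → (I →₀ Q)) (own : I → ℕ)
    (hF : ∀ s, StrictMono s → F ((Finset.range n).image s) = ∑ j ∈ Finset.range n, h j (s j))
    (hown : ∀ j x, j ≤ x → ∀ i ∈ (h j x).support, own i = x)
    (J : Finset ℕ) (hJ : J ⊆ Finset.range n) (hJc : J.card = p) :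
    {x | ∑ j ∈ J, h j x ≠ 0}.Finite := by
  classical
  by_contra hX
  set X := {x | ∑ j ∈ J, h j x ≠ 0} with hXdef
  have hX : X.Infinite := hX
  let e := Nat.nth (· ∈ X)
  have he : StrictMono e := Nat.nth_strictMono hX
  have heX : ∀ i, e i ∈ X := fun i => Nat.nth_mem_of_infinite hX i
  let X1 : Set ℕ := Set.range (fun i => e (2 * i))
  let X2 : Set ℕ := Set.range (fun i => e (2 * i + 1))
  have hX1 : X1.Infinite := Set.infinite_range_of_injective (fun a b hab => by
    have := he.injective hab; omega)
  have hX2 : X2.Infinite := Set.infinite_range_of_injective (fun a b hab => by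
    have := he.injective hab; omega)
  have hX12 : ∀ x ∈ X2, x ∉ X1 := by
    rintro _ ⟨i, rfl⟩ ⟨j, hj⟩
    have := he.injective hj; omega
  have hX1X : X1 ⊆ X := by rintro _ ⟨i, rfl⟩; exact heX _
  have hψ : ∀ x, ∃ ψ : (I →₀ Q) →+ AddCircle (1:ℝ), x ∈ X → 1/4 ≤ ‖ψ (∑ j ∈ J, h j x)‖ := by
    intro x
    by_cases hx : x ∈ X
    · obtain ⟨ψ, h⟩ := bs_char _ hx
      exact ⟨ψ, fun _ => h⟩
    · exact ⟨0, fun h => absurd h hx⟩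
  choose ψ hψ using hψ
  obtain ⟨χ, hχ⟩ := bs_glue own (fun x => if x ∈ X1 then ψ x else 0)
  have hχh : ∀ j < n, ∀ x, n ≤ x → χ (h j x) = if x ∈ X1 then ψ x (h j x) else 0 := by
    intro j hj x hx
    rw [hχ x (h j x) (hown j x (by omega))]
    split_ifs <;> simp
  obtain ⟨C, _, col, hcol⟩ := hP2 χ (1/8) (by norm_num) ∅
  have hp' : (0:ℝ) < p := by exact_mod_cast hp
  obtain ⟨t, _, r, hr⟩ := bs_net (1 / (16 * p)) (by positivity)
  obtain ⟨Y1, hY1X, hY1, γ1, hγ1⟩ := bs_pigeon X1 hX1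
    (fun x => ((col x, fun j : Fin n => r (ψ x (h j x))) : C × (Fin n → t)))
  obtain ⟨Y2, hY2X, hY2, γ2, hγ2⟩ := bs_pigeon X2 hX2 col
  obtain ⟨s, hs, hsP⟩ := Filter.extraction_forall_of_frequently
    (P := fun j x => n ≤ x ∧ if j ∈ J then x ∈ Y1 else x ∈ Y2) (by
      intro j
      have : ∃ᶠ x in Filter.atTop, if j ∈ J then x ∈ Y1 else x ∈ Y2 := by
        split_ifs
        · exact Nat.frequently_atTop_iff_infinite.2 hY1
        · exact Nat.frequently_atTop_iff_infinite.2 hY2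
      exact (this.and_eventually (Filter.eventually_ge_atTop n)).mono (fun x hx => ⟨hx.2, hx.1⟩))
  have hs1 : ∀ j ∈ J, s j ∈ Y1 := by
    intro j hj; have := (hsP j).2; rwa [if_pos hj] at this
  have hs2 : ∀ j ∉ J, s j ∈ Y2 := by
    intro j hj; have := (hsP j).2; rwa [if_neg hj] at this
  have h1 := hcol (J.image s) ((Finset.range n \ J).image s) (by simp) (by simp)
    ((Finset.disjoint_image hs.injective).2 Finset.disjoint_sdiff)
    (by rw [Finset.card_image_of_injective _ hs.injective, hJc])
    (by rw [Finset.card_image_of_injective _ hs.injective, Finset.card_sdiff_of_subset hJ, hJc,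
          Finset.card_range]
        exact ⟨1, by omega⟩)
    ⟨γ1.1, by
      intro a ha
      obtain ⟨j, hj, rfl⟩ := Finset.mem_image.1 ha
      exact congrArg Prod.fst (hγ1 _ (hs1 j hj))⟩
    ⟨γ2, by
      intro a ha
      obtain ⟨j, hj, rfl⟩ := Finset.mem_image.1 ha
      exact hγ2 _ (hs2 j (Finset.mem_sdiff.1 hj).2)⟩
  rw [hF0, sub_zero, Finset.empty_union, ← Finset.image_union, Finset.union_sdiff_of_subset hJ,
    hF s hs, map_sum] at h1
  have h2 : ∑ j ∈ Finset.range n, χ (h j (s j)) = ∑ j ∈ J, ψ (s j) (h j (s j)) := by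
    rw [← Finset.sum_subset hJ]
    · apply Finset.sum_congr rfl
      intro j hj
      rw [hχh j (Finset.mem_range.1 (hJ hj)) _ (hsP j).1, if_pos (hY1X (hs1 j hj))]
    · intro j hj hjJ
      rw [hχh j (Finset.mem_range.1 hj) _ (hsP j).1, if_neg (hX12 _ (hY2X (hs2 j hjJ)))]
  rw [h2] at h1
  obtain ⟨y, hy⟩ := hY1.nonempty
  have h3 := hψ y (hX1X (hY1X hy))
  rw [map_sum] at h3
  have h4 : ‖∑ j ∈ J, ψ y (h j y) - ∑ j ∈ J, ψ (s j) (h j (s j))‖ ≤ 1/8 := by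
    rw [← Finset.sum_sub_distrib]
    refine (norm_sum_le _ _).trans ?_
    have h5 : ∀ j ∈ J, ‖ψ y (h j y) - ψ (s j) (h j (s j))‖ ≤ 1 / (8 * p) := by
      intro j hj
      have hjn := Finset.mem_range.1 (hJ hj)
      have ha := congrFun (congrArg Prod.snd (hγ1 y hy)) ⟨j, hjn⟩
      have hb := congrFun (congrArg Prod.snd (hγ1 _ (hs1 j hj))) ⟨j, hjn⟩
      simp only at ha hb
      have h6 := hr (ψ y (h j y))
      have h7 := hr (ψ (s j) (h j (s j)))
      rw [ha] at h6
      rw [hb] at h7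
      rw [← dist_eq_norm]
      have h8 := dist_triangle_right (ψ y (h j y)) (ψ (s j) (h j (s j))) (γ1.2 ⟨j, hjn⟩).1
      have h9 : (1:ℝ) / (8 * p) = 1 / (16 * p) + 1 / (16 * p) := by field_simp; norm_num
      linarith
    refine (Finset.sum_le_card_nsmul _ _ _ h5).trans ?_
    rw [hJc, nsmul_eq_mul]
    apply le_of_eq
    field_simp
  have h10 := norm_sub_norm_le (∑ j ∈ J, ψ y (h j y)) (∑ j ∈ J, ψ (s j) (h j (s j)))
  linarith

theorem bs_claim3 {I Q : Type*} [AddCommGroup Q] {p n : ℕ} (hp : 0 < p) (hn : n = 2 * p)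
    (F : Finset ℕ → (I →₀ Q)) (hF0 : F ∅ = 0) (hP2 : BsP2 p F)
    (h : ℕ → ℕ → (I →₀ Q)) (own : I → ℕ)
    (hF : ∀ s, StrictMono s → F ((Finset.range n).image s) = ∑ j ∈ Finset.range n, h j (s j))
    (hown : ∀ j x, j ≤ x → ∀ i ∈ (h j x).support, own i = x) :
    ∃ X0, ∀ x, X0 ≤ x → (∀ j < n, h j x = h 0 x) ∧ p • h 0 x = 0 := by
  classical
  have hfin : (⋃ J ∈ (Finset.range n).powersetCard p, {x | ∑ j ∈ J, h j x ≠ 0}).Finite := by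
    apply Set.Finite.biUnion (Finset.finite_toSet _)
    intro J hJ
    rw [Finset.mem_coe, Finset.mem_powersetCard] at hJ
    exact bs_claim2 hp hn F hF0 hP2 h own hF hown J hJ.1 hJ.2
  obtain ⟨M, hM⟩ := hfin.bddAbove
  refine ⟨M + 1, fun x hx => ?_⟩
  have hz : ∀ J ⊆ Finset.range n, J.card = p → ∑ j ∈ J, h j x = 0 := by
    intro J hJ hJc
    by_contra hne
    have : x ≤ M := hM (by
      simp only [Set.mem_iUnion]
      exact ⟨J, Finset.mem_powersetCard.2 ⟨hJ, hJc⟩, hne⟩)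
    omega
  have hall : ∀ j < n, h j x = h 0 x := by
    intro j hj
    by_cases hj0 : j = 0
    · rw [hj0]
    obtain ⟨J, hJ, hJc⟩ := Finset.exists_subset_card_eq
      (s := (Finset.range n).erase j |>.erase 0) (n := p - 1) (by
        rw [Finset.card_erase_of_mem, Finset.card_erase_of_mem, Finset.card_range]
        · omega
        · exact Finset.mem_range.2 hj
        · rw [Finset.mem_erase, Finset.mem_range]; omega)
    have hjJ : j ∉ J := fun hmem => by
      have := hJ hmem; simp at this
    have h0J : 0 ∉ J := fun hmem => by
      have := hJ hmem; simp at this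
    have hJr : J ⊆ Finset.range n :=
      hJ.trans ((Finset.erase_subset _ _).trans (Finset.erase_subset _ _))
    have e1 := hz (insert j J) (Finset.insert_subset (Finset.mem_range.2 hj) hJr)
      (by rw [Finset.card_insert_of_notMem hjJ, hJc]; omega)
    have e2 := hz (insert 0 J) (Finset.insert_subset (Finset.mem_range.2 (by omega)) hJr)
      (by rw [Finset.card_insert_of_notMem h0J, hJc]; omega)
    rw [Finset.sum_insert hjJ] at e1
    rw [Finset.sum_insert h0J] at e2
    exact add_right_cancel (e1.trans e2.symm)
  refine ⟨hall, ?_⟩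
  have e := hz (Finset.range p) (Finset.range_subset_range.2 (by omega)) (Finset.card_range p)
  rw [Finset.sum_congr rfl (fun j hj => hall j (by have := Finset.mem_range.1 hj; omega)),
    Finset.sum_const, Finset.card_range] at e
  exact e

theorem bs_claim4 {I Q : Type*} [AddCommGroup Q] {p n : ℕ} (hp : 0 < p) (hn : n = 2 * p)
    (F : Finset ℕ → (I →₀ Q)) (hF0 : F ∅ = 0) (hP2 : BsP2 p F)
    (h : ℕ → ℕ → (I →₀ Q)) (own : I → ℕ)
    (hF : ∀ s, StrictMono s → F ((Finset.range n).image s) = ∑ j ∈ Finset.range n, h j (s j))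
    (hown : ∀ j x, j ≤ x → ∀ i ∈ (h j x).support, own i = x) :
    ∃ (g : ℕ → (I →₀ Q)) (X0 : ℕ), ∀ B : Finset ℕ, B.card = p → (∀ x ∈ B, X0 ≤ x) →
      (∀ x ∈ B, p • g x = 0) ∧ F B = ∑ x ∈ B, g x := by
  classical
  obtain ⟨X0, hX0⟩ := bs_claim3 hp hn F hF0 hP2 h own hF hown
  have hFA : ∀ A : Finset ℕ, A.card = n → (∀ x ∈ A, X0 ≤ x) → F A = ∑ x ∈ A, h 0 x := by
    intro A hA hAX
    obtain ⟨s, hs, hsA⟩ := bs_enum A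
    rw [hA] at hsA
    have e := hF s hs
    rw [hsA] at e
    rw [e]
    conv_rhs => rw [← hsA]
    rw [Finset.sum_image (fun a _ b _ hab => hs.injective hab)]
    apply Finset.sum_congr rfl
    intro j hj
    refine (hX0 (s j) (hAX _ ?_)).1 j (Finset.mem_range.1 hj)
    rw [← hsA]; exact Finset.mem_image_of_mem _ hj
  refine ⟨h 0, X0, fun B hB hBX => ⟨fun x hx => (hX0 x (hBX x hx)).2, ?_⟩⟩
  by_contra hne
  set y := F B - ∑ x ∈ B, h 0 x with hy
  have hy0 : y ≠ 0 := sub_ne_zero.2 hne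
  obtain ⟨χ', hχ'⟩ := bs_char y hy0
  let χ : (I →₀ Q) →+ AddCircle (1:ℝ) := Finsupp.liftAddHom
    (fun i => if i ∈ y.support then χ'.comp (Finsupp.singleAddHom i) else 0)
  have hχy : χ y = χ' y := by
    conv_rhs => rw [← Finsupp.sum_single y]
    simp only [χ]
    rw [Finsupp.liftAddHom_apply, Finsupp.sum, Finsupp.sum, map_sum]
    apply Finset.sum_congr rfl
    intro i hi
    rw [if_pos hi]
    rfl
  have hχ0 : ∀ z : I →₀ Q, (∀ i ∈ z.support, i ∉ y.support) → χ z = 0 := by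
    intro z hz
    simp only [χ]
    rw [Finsupp.liftAddHom_apply, Finsupp.sum]
    apply Finset.sum_eq_zero
    intro i hi
    rw [if_neg (hz i hi)]
    rfl
  obtain ⟨C, _, col, hcol⟩ := hP2 χ (1/4) (by norm_num) B
  obtain ⟨Y, hYX, hY, γ, hγ⟩ := bs_pigeon (Set.Ioi (X0 + B.sup id + y.support.sup own))
    (Set.Ioi_infinite _) col
  obtain ⟨D, hDY, hDc⟩ := hY.exists_subset_card_eq p
  have hD : ∀ x ∈ D, X0 + B.sup id + y.support.sup own < x := fun x hx => hYX (hDY hx)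
  have hBD : Disjoint B D := by
    rw [Finset.disjoint_left]
    intro x hxB hxD
    have h1 := hD x hxD
    have h2 : x ≤ B.sup id := Finset.le_sup (f := id) hxB
    omega
  have h1 := hcol D ∅ hBD (by simp) (by simp) (by rw [hDc]) (by simp)
    ⟨γ, fun a ha => hγ a (hDY ha)⟩ ⟨γ, by simp⟩
  rw [Finset.union_empty, hFA (B ∪ D) (by rw [Finset.card_union_of_disjoint hBD, hB, hDc]; omega)
    (by
      intro x hx
      rcases Finset.mem_union.1 hx with hx | hx
      · exact hBX x hx
      · have := hD x hx; omega), Finset.sum_union hBD] at h1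
  have h2 : χ (∑ x ∈ D, h 0 x) = 0 := by
    rw [map_sum]
    apply Finset.sum_eq_zero
    intro x hx
    apply hχ0
    intro i hi hiy
    have h3 := hown 0 x (Nat.zero_le _) i hi
    have h4 : own i ≤ y.support.sup own := Finset.le_sup hiy
    have h5 := hD x hx
    omega
  have h3 : ∑ x ∈ B, h 0 x + ∑ x ∈ D, h 0 x - F B = ∑ x ∈ D, h 0 x - y := by
    rw [hy]; abel
  rw [h3, map_sub, h2, zero_sub, norm_neg, hχy] at h1
  linarith

theorem bs_core {I K Q : Type*} [AddCommGroup Q] [Fintype K] {p : ℕ} (hp : 0 < p)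
    (F : Finset ℕ → (I →₀ Q)) (hF0 : F ∅ = 0) (hP2 : BsP2 p F)
    (l : K → Q) (hl : ∀ k, l k ≠ 0) (ξ : K → Finset ℕ → I)
    (hinj : ∀ A : Finset ℕ, A.card = 2 * p → Function.Injective (fun k => ξ k A))
    (hF : ∀ A : Finset ℕ, A.card = 2 * p → F A = ∑ k, Finsupp.single (ξ k A) (l k)) :
    ∃ (e : ℕ → ℕ) (g : ℕ → (I →₀ Q)), StrictMono e ∧ ∀ B : Finset ℕ, B.card = p →
      (∀ x ∈ B, p • g x = 0) ∧ F (B.image e) = ∑ x ∈ B, g x := by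
  classical
  obtain ⟨e, he, hom⟩ := bs_hom (2 * p) ξ
  let F' : Finset ℕ → (I →₀ Q) := fun A => F (A.image e)
  let ξ' : K → (ℕ → ℕ) → I := fun k s => ξ k (((Finset.range (2 * p)).image s).image e)
  have hcard : ∀ s : ℕ → ℕ, StrictMono s → ((Finset.range (2 * p)).image s).card = 2 * p := by
    intro s hs
    rw [Finset.card_image_of_injective _ hs.injective, Finset.card_range]
  have hcard' : ∀ s : ℕ → ℕ, StrictMono s →
      (((Finset.range (2 * p)).image s).image e).card = 2 * p := by
    intro s hs
    rw [Finset.card_image_of_injective _ he.injective, hcard s hs]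
  have hcong' : ∀ k s t, (∀ i < 2 * p, s i = t i) → ξ' k s = ξ' k t := by
    intro k s t h
    have : (Finset.range (2 * p)).image s = (Finset.range (2 * p)).image t :=
      Finset.image_congr (fun i hi => h i (Finset.mem_range.1 hi))
    simp only [ξ', this]
  have hom' : ∀ k l (θ s t : ℕ → ℕ), StrictMono θ → StrictMono s → StrictMono t →
      (ξ' k (θ ∘ s) = ξ' l (θ ∘ t) ↔ ξ' k s = ξ' l t) := by
    intro k l θ s t hθ hs ht
    simp only [ξ']
    rw [← Finset.image_image (f := s), ← Finset.image_image (f := t)]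
    exact hom θ hθ _ _ (hcard s hs) (hcard t ht) k l
  have hF0' : F' ∅ = 0 := by simp [F', hF0]
  have hP2' : BsP2 p F' := by
    intro χ ε hε x
    obtain ⟨C, hC, col, h⟩ := hP2 χ ε hε (x.image e)
    refine ⟨C, hC, col ∘ e, ?_⟩
    intro Y Z h1 h2 h3 h4 h5 ⟨γ, h6⟩ ⟨γ', h7⟩
    have := h (Y.image e) (Z.image e) ((Finset.disjoint_image he.injective).2 h1)
      ((Finset.disjoint_image he.injective).2 h2) ((Finset.disjoint_image he.injective).2 h3)
      (by rwa [Finset.card_image_of_injective _ he.injective])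
      (by rwa [Finset.card_image_of_injective _ he.injective])
      ⟨γ, by
        intro a ha
        obtain ⟨b, hb, rfl⟩ := Finset.mem_image.1 ha
        exact h6 b hb⟩
      ⟨γ', by
        intro a ha
        obtain ⟨b, hb, rfl⟩ := Finset.mem_image.1 ha
        exact h7 b hb⟩
    rw [← Finset.image_union, ← Finset.image_union] at this
    exact this
  have hinj' : ∀ s, StrictMono s → Function.Injective (fun k => ξ' k s) :=
    fun s hs => hinj _ (hcard' s hs)
  have hF' : ∀ s, StrictMono s →
      F' ((Finset.range (2 * p)).image s) = ∑ k, Finsupp.single (ξ' k s) (l k) :=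
    fun s hs => hF _ (hcard' s hs)
  have hone := bs_kill rfl hcong' hom' F' hF0' hP2' l hl hinj' hF'
  obtain ⟨h, own, hFh, hown⟩ := bs_split hcong' hom' F' l hF' hone
  obtain ⟨g, X0, hg⟩ := bs_claim4 hp rfl F' hF0' hP2' h own hFh hown
  have hadd : StrictMono (fun x => x + X0) := fun a b hab => by simp only; omega
  refine ⟨fun x => e (x + X0), fun x => g (x + X0), he.comp hadd, ?_⟩
  intro B hB
  obtain ⟨h1, h2⟩ := hg (B.image (fun x => x + X0))
    (by rw [Finset.card_image_of_injective _ hadd.injective, hB])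
    (by
      intro x hx
      obtain ⟨b, _, rfl⟩ := Finset.mem_image.1 hx
      omega)
  refine ⟨fun x hx => h1 _ (Finset.mem_image_of_mem _ hx), ?_⟩
  simp only [F'] at h2
  rw [Finset.image_image, Finset.sum_image (fun a _ b _ hab => hadd.injective hab)] at h2
  exact h2

theorem bs_list {I Q : Type*} [AddCommGroup Q] (y : I →₀ Q) (γ : List Q)
    (h : y.support.toList.map y = γ) : ∃ ξ : Fin γ.length → I, Function.Injective ξ ∧
      (∀ k, γ.get k ≠ 0) ∧ y = ∑ k, Finsupp.single (ξ k) (γ.get k) := by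
  classical
  subst h
  have hnd := y.support.nodup_toList
  have hlen : (y.support.toList.map y).length = y.support.toList.length := List.length_map _
  refine ⟨fun k => y.support.toList.get (k.cast hlen), ?_, ?_, ?_⟩
  · exact (List.nodup_iff_injective_get.1 hnd).comp (Fin.cast_injective hlen)
  · intro k
    have : y.support.toList.get (k.cast hlen) ∈ y.support.toList := List.get_mem _ _
    rw [Finset.mem_toList, Finsupp.mem_support_iff] at this
    simpa using this
  · conv_lhs => rw [← Finsupp.sum_single y]
    rw [Finsupp.sum, ← Finset.sum_map_toList, ← List.sum_ofFn]
    congr 1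
    apply List.ext_get
    · simp
    · intro i h1 h2
      simp

theorem bs_main (p : ℕ) (hp : p.Prime) (κ : Type u) (H : Type v) [AddCommGroup H]
    (hκ : Cardinal.beth ((2 * p - 1 : ℕ) : Ordinal) < Cardinal.mk κ)
    (f : (κ →₀ ZMod p) → H)
    (hf : @Continuous _ _ (bohrTopology (κ →₀ ZMod p)) (bohrTopology H) f) :
    ∃ (I : Type v) (j : H →+ (I →₀ (ℚ × AddCircle (1:ℚ)))) (w : ℕ → κ)
      (g : ℕ → (I →₀ (ℚ × AddCircle (1:ℚ)))), Function.Injective j ∧ Function.Injective w ∧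
      ∀ B : Finset ℕ, B.card = p → (∀ x ∈ B, p • g x = 0) ∧
        j (f (∑ a ∈ B, Finsupp.single (w a) 1) - f 0) = ∑ x ∈ B, g x := by
  classical
  obtain ⟨I, j, hj⟩ := bs_embed H
  let X : Finset κ → (κ →₀ ZMod p) := fun A => ∑ a ∈ A, Finsupp.single a 1
  let Φ : Finset κ → (I →₀ (ℚ × AddCircle (1:ℚ))) := fun A => j (f (X A) - f 0)
  have hcount : Countable (AddCircle (1:ℚ)) :=
    (QuotientAddGroup.mk_surjective (s := AddSubgroup.zmultiples (1:ℚ))).countable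
  obtain ⟨S, hS, γ, hγ⟩ := bs_erdosRado (2 * p - 1) κ hκ
    (fun A => ((Φ A).support.toList.map (Φ A) : List (ℚ × AddCircle (1:ℚ))))
  have hpp := hp.pos
  have h2p : 2 * p - 1 + 1 = 2 * p := by omega
  rw [h2p] at hγ
  let ι : ℕ → κ := fun i => (hS.natEmbedding S i : κ)
  have hι : Function.Injective ι := Subtype.val_injective.comp (hS.natEmbedding S).injective
  have hιS : ∀ i, ι i ∈ S := fun i => (hS.natEmbedding S i).2
  let F : Finset ℕ → (I →₀ (ℚ × AddCircle (1:ℚ))) := fun A => Φ (A.image ι)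
  have hF0 : F ∅ = 0 := by simp [F, Φ, X]
  have hP2 : BsP2 p F := by
    intro χ ε hε x
    obtain ⟨C, hC, col, h⟩ := bs_cont p hp f hf (χ.comp j) ε hε (X (x.image ι))
    refine ⟨C, hC, col ∘ ι, ?_⟩
    intro Y Z h1 h2 h3 h4 h5 ⟨γ, h6⟩ ⟨γ', h7⟩
    have := h (Y.image ι) (Z.image ι)
      (by rwa [Finset.card_image_of_injective _ hι])
      (by rwa [Finset.card_image_of_injective _ hι])
      ⟨γ, by
        intro a ha
        obtain ⟨b, hb, rfl⟩ := Finset.mem_image.1 ha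
        exact h6 b hb⟩
      ⟨γ', by
        intro a ha
        obtain ⟨b, hb, rfl⟩ := Finset.mem_image.1 ha
        exact h7 b hb⟩
    have e1 : X ((x ∪ (Y ∪ Z)).image ι) = X (x.image ι) +
        (∑ a ∈ Y.image ι, Finsupp.single a 1 + ∑ a ∈ Z.image ι, Finsupp.single a 1) := by
      simp only [X]
      rw [Finset.image_union, Finset.image_union, Finset.sum_union, Finset.sum_union]
      · exact (Finset.disjoint_image hι).2 h3
      · rw [← Finset.image_union]
        exact (Finset.disjoint_image hι).2 (Finset.disjoint_union_right.2 ⟨h1, h2⟩)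
    rw [← e1] at this
    have e2 : F (x ∪ (Y ∪ Z)) - F x = j (f (X ((x ∪ (Y ∪ Z)).image ι)) - f (X (x.image ι))) := by
      simp only [F, Φ]
      rw [← map_sub]
      congr 1
      abel
    rw [e2]
    exact this
  have hP1 : ∀ A : Finset ℕ, A.card = 2 * p → ∃ ξ : Fin γ.length → I, Function.Injective ξ ∧
      (∀ k, γ.get k ≠ 0) ∧ F A = ∑ k, Finsupp.single (ξ k) (γ.get k) := by
    intro A hA
    apply bs_list
    apply hγ (A.image ι)
    · rw [Finset.card_image_of_injective _ hι, hA]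
    · intro a ha
      rw [Finset.mem_coe, Finset.mem_image] at ha
      obtain ⟨b, _, rfl⟩ := ha
      exact hιS b
  choose ξ hξ1 hξ2 hξ3 using hP1
  obtain ⟨e, g, he, hg⟩ := bs_core hpp F hF0 hP2 (fun k => γ.get k)
    (hξ2 (Finset.range (2 * p)) (Finset.card_range _))
    (fun k A => if h : A.card = 2 * p then ξ A h k else
      ξ (Finset.range (2 * p)) (Finset.card_range _) k)
    (by
      intro A hA
      simp only [hA, dif_pos]
      exact hξ1 A hA)
    (by
      intro A hA
      simp only [hA, dif_pos]
      exact hξ3 A hA)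
  refine ⟨I, j, ι ∘ e, g, hj, hι.comp he.injective, ?_⟩
  intro B hB
  obtain ⟨h1, h2⟩ := hg B hB
  refine ⟨h1, ?_⟩
  rw [← h2]
  simp only [F, Φ, X]
  rw [Finset.image_image, Finset.sum_image (fun a _ b _ hab => (hι.comp he.injective) hab)]

/-- (Straightening law, general case) Let `p` be prime, `κ > ℶ_{2p-1}`,
`V_κ = ⊕_κ ℤ/pℤ` and `H` an abelian group. Every continuous `f : V_κ^# → H^#` is linear
on `[S]^p` for some infinite `S ⊆ κ`: it agrees there with `h + a` for a homomorphism
`h` on the subgroup spanned by `[S]^p` and a constant `a ∈ H`. -/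
theorem bohr_straightening_general (p : ℕ) (hp : p.Prime) (κ H : Type*) [AddCommGroup H]
    (hκ : Cardinal.beth ((2 * p - 1 : ℕ) : Ordinal) < Cardinal.mk κ) :
    letI := bohrTopology (κ →₀ ZMod p)
    letI := bohrTopology H
    ∀ f : (κ →₀ ZMod p) → H, Continuous f →
      ∃ S : Set κ, S.Infinite ∧
        ∃ (h : (AddSubgroup.closure (basisSums p S p)) →+ H) (a : H),
          ∀ (x : κ →₀ ZMod p) (hx : x ∈ basisSums p S p),
            f x = h ⟨x, AddSubgroup.subset_closure hx⟩ + a := by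
  intro f hf
  classical
  obtain ⟨I, j, w, g, hj, hw, hg⟩ := bs_main p hp κ H hκ f hf
  have hpp := hp.pos
  have hg0 : ∀ x, p • g x = 0 := by
    intro x
    obtain ⟨B, hxB, hB⟩ := Infinite.exists_superset_card_eq {x} p (by rw [Finset.card_singleton]; exact hpp)
    exact (hg B hB).1 x (hxB (by simp))
  let y : Finset ℕ → (κ →₀ ZMod p) := fun B => ∑ a ∈ B, Finsupp.single (w a) 1
  let t := Finset.range (p - 1)
  have hins : ∀ x, p - 1 ≤ x → j (f (y (insert x t)) - f 0) = g x + ∑ a ∈ t, g a := by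
    intro x hx
    have hxt : x ∉ t := by simp only [t, Finset.mem_range]; omega
    rw [(hg (insert x t) (by
      rw [Finset.card_insert_of_notMem hxt]; simp only [t, Finset.card_range]; omega)).2,
      Finset.sum_insert hxt]
  let G : ℕ → H := fun x => if p ≤ x then f (y (insert x t)) - f (y (insert (p - 1) t)) else 0
  have hG : ∀ x, p ≤ x → j (G x) = g x - g (p - 1) := by
    intro x hx
    have h1 := hins x (by omega)
    have h2 := hins (p - 1) le_rfl
    have h3 : G x = (f (y (insert x t)) - f 0) - (f (y (insert (p - 1) t)) - f 0) := by
      simp only [G, if_pos hx]; abel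
    rw [h3, map_sub, h1, h2]; abel
  have hGp : ∀ x, p • G x = 0 := by
    intro x
    by_cases hx : p ≤ x
    · apply hj
      rw [map_nsmul, hG x hx, nsmul_sub, hg0, hg0, sub_zero, map_zero]
    · simp [G, hx]
  let G' : κ → H := Function.extend w G 0
  have hG' : ∀ a, p • G' a = 0 := by
    intro a
    by_cases ha : ∃ x, w x = a
    · obtain ⟨x, rfl⟩ := ha
      simp only [G', hw.extend_apply, hGp]
    · simp [G', Function.extend_apply' _ _ _ ha]
  let Ψ : (κ →₀ ZMod p) →+ H := Finsupp.liftAddHom (fun a =>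
    ZMod.lift p ⟨zmultiplesHom H (G' a), by simpa using hG' a⟩)
  have hΨ : ∀ a, Ψ (Finsupp.single a 1) = G' a := by
    intro a
    simp only [Ψ, Finsupp.liftAddHom_apply_single]
    have := ZMod.lift_coe p ⟨zmultiplesHom H (G' a), by simpa using hG' a⟩ 1
    simpa using this
  refine ⟨w '' Set.Ici p, (Set.Ici_infinite p).image hw.injOn, Ψ.comp (AddSubgroup.subtype _),
    f 0, ?_⟩
  intro x hx
  obtain ⟨hc, h1, hS⟩ := hx
  obtain ⟨B, hBp, hBx⟩ : ∃ B : Finset ℕ, (∀ b ∈ B, p ≤ b) ∧ B.image w = x.support := by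
    obtain ⟨B, hB, hBi⟩ := Finset.subset_set_image_iff.1 hS
    exact ⟨B, fun b hb => hB hb, hBi⟩
  have hBc : B.card = p := by
    rw [← hc, ← hBx, Finset.card_image_of_injective _ hw]
  have hxy : x = y B := by
    conv_lhs => rw [← Finsupp.sum_single x]
    rw [Finsupp.sum, ← hBx, Finset.sum_image (fun a _ b _ hab => hw hab)]
    apply Finset.sum_congr rfl
    intro b hb
    rw [h1 (w b) (by rw [← hBx]; exact Finset.mem_image_of_mem _ hb)]
  have hΨx : Ψ x = ∑ b ∈ B, G b := by
    rw [hxy, map_sum]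
    apply Finset.sum_congr rfl
    intro b _
    rw [hΨ]
    simp only [G', hw.extend_apply]
  have key : f x - f 0 = ∑ b ∈ B, G b := by
    apply hj
    rw [hxy, (hg B hBc).2, map_sum, Finset.sum_congr rfl (fun b hb => hG b (hBp b hb)),
      Finset.sum_sub_distrib, Finset.sum_const, hBc, hg0, sub_zero]
  show f x = Ψ x + f 0
  rw [hΨx, ← key, sub_add_cancel]
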